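/- arXiv:2605.07459 — 12 statements merged into one kernel-verified Lean document; each statement's English description precedes it below -/
import Mathlib

section
/- The robust Bellman optimality operator is a γ-contraction in the sup norm: for all u, v : S → ℝ, ‖Tu − Tv‖∞ ≤ γ‖u − v‖∞. -/
/-- The robust expected continuation value: `max_{p ∈ P} ∑_t p t * v t`
(the maximum is attained, by compactness; we use `sSup`). -/
noncomputable def robustSup {S : Type*} [Fintype S] (P : Set (S → ℝ)) (v : S → ℝ) : ℝ :=
  sSup ((fun p => ∑ t, p t * v t) '' P)

/-- The robust Bellman optimality operator
`(T v)(s) = c(s) + γ · min_{a ∈ A} max_{p ∈ P(s,a)} ∑_t p(t) v(t)`. -/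
noncomputable def bellmanT {S A : Type*} [Fintype S] [Fintype A] [Nonempty A]
    (c : S → ℝ) (γ : ℝ) (P : S → A → Set (S → ℝ)) (v : S → ℝ) : S → ℝ :=
  fun s => c s + γ * Finset.univ.inf' Finset.univ_nonempty (fun a => robustSup (P s a) v)

theorem robustSup_le_aux {S : Type*} [Fintype S] (P : Set (S → ℝ)) (hne : P.Nonempty)
    (hcpt : IsCompact P) (hs : ∀ p ∈ P, (∀ t, 0 ≤ p t) ∧ ∑ t, p t = 1) (u v : S → ℝ) :
    robustSup P u ≤ robustSup P v + ‖u - v‖ := by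
  unfold robustSup
  apply csSup_le (hne.image _)
  rintro _ ⟨p, hp, rfl⟩
  have hb : BddAbove ((fun p : S → ℝ => ∑ t, p t * v t) '' P) :=
    (hcpt.image (by fun_prop)).bddAbove
  have h1 : ∑ t, p t * v t ≤ sSup ((fun p : S → ℝ => ∑ t, p t * v t) '' P) :=
    le_csSup hb ⟨p, hp, rfl⟩
  have h2 : ∑ t, p t * u t ≤ ∑ t, (p t * v t + p t * ‖u - v‖) := by
    apply Finset.sum_le_sum
    intro t _
    have h3 : u t - v t ≤ ‖u - v‖ := (le_abs_self _).trans (norm_le_pi_norm (u - v) t)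
    nlinarith [(hs p hp).1 t]
  rw [Finset.sum_add_distrib, ← Finset.sum_mul, (hs p hp).2, one_mul] at h2
  show ∑ t, p t * u t ≤ _
  linarith

theorem bellmanT_sub_le_aux {S A : Type*} [Fintype S] [Fintype A] [Nonempty A]
    (c : S → ℝ) (γ : ℝ) (hγ0 : 0 ≤ γ) (P : S → A → Set (S → ℝ))
    (hne : ∀ s a, (P s a).Nonempty) (hcpt : ∀ s a, IsCompact (P s a))
    (hsimplex : ∀ s a, ∀ p ∈ P s a, (∀ t, 0 ≤ p t) ∧ ∑ t, p t = 1) (u v : S → ℝ) (s : S) :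
    bellmanT c γ P u s - bellmanT c γ P v s ≤ γ * ‖u - v‖ := by
  unfold bellmanT
  obtain ⟨a, _, ha⟩ := Finset.exists_mem_eq_inf' (Finset.univ_nonempty (α := A))
    (fun a => robustSup (P s a) v)
  have h1 := Finset.inf'_le (fun a => robustSup (P s a) u) (Finset.mem_univ a)
  have h2 := robustSup_le_aux (P s a) (hne s a) (hcpt s a) (hsimplex s a) u v
  have h3 := mul_le_mul_of_nonneg_left (h1.trans h2) hγ0
  rw [ha]
  linarith

/-- The robust Bellman optimality operator is a `γ`-contraction in the sup norm. -/
theorem robust_bellman_contraction {S A : Type*}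
    [Fintype S] [Nonempty S] [Fintype A] [Nonempty A]
    (c : S → ℝ) (γ : ℝ) (hγ0 : 0 ≤ γ) (hγ1 : γ < 1)
    (P : S → A → Set (S → ℝ))
    (hne : ∀ s a, (P s a).Nonempty)
    (hcpt : ∀ s a, IsCompact (P s a))
    (hsimplex : ∀ s a, ∀ p ∈ P s a, (∀ t, 0 ≤ p t) ∧ ∑ t, p t = 1) :
    ∀ u v : S → ℝ, ‖bellmanT c γ P u - bellmanT c γ P v‖ ≤ γ * ‖u - v‖ := by
  intro u v
  rw [pi_norm_le_iff_of_nonneg (by positivity)]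
  intro s
  rw [Real.norm_eq_abs, Pi.sub_apply, abs_le]
  have h1 := bellmanT_sub_le_aux c γ hγ0 P hne hcpt hsimplex u v s
  have h2 := bellmanT_sub_le_aux c γ hγ0 P hne hcpt hsimplex v u s
  rw [norm_sub_rev] at h2
  constructor <;> linarith
end

section
/- Let v* be the unique fixed point of the robust Bellman optimality operator T. For every agent policy σ : S → A and every value vector v^σ for σ, one has v*(s) ≤ v^σ(s) for every state s ∈ S. -/
/-- If `v*` is the (unique) fixed point of `T`, then for every agent policy `σ`
and every value vector `vσ` for `σ`, one has `v* s ≤ vσ s` for all states `s`. -/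
theorem fixed_point_le_policy_value {S A : Type*}
    [Fintype S] [Nonempty S] [Fintype A] [Nonempty A]
    (c : S → ℝ) (γ : ℝ) (hγ0 : 0 ≤ γ) (hγ1 : γ < 1)
    (P : S → A → Set (S → ℝ))
    (hne : ∀ s a, (P s a).Nonempty)
    (hcpt : ∀ s a, IsCompact (P s a))
    (hsimplex : ∀ s a, ∀ p ∈ P s a, (∀ t, 0 ≤ p t) ∧ ∑ t, p t = 1)
    (vstar : S → ℝ) (hfix : bellmanT c γ P vstar = vstar)
    (σ : S → A) (vσ : S → ℝ)
    (hval : ∀ s, vσ s = c s + γ * robustSup (P s (σ s)) vσ) :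
    ∀ s, vstar s ≤ vσ s := by
  obtain ⟨s0, hs0⟩ := Finite.exists_max (fun s => vstar s - vσ s)
  have hbdd : BddAbove ((fun p : S → ℝ => ∑ t, p t * vσ t) '' P s0 (σ s0)) := by
    apply IsCompact.bddAbove
    apply (hcpt s0 (σ s0)).image
    fun_prop
  have h1 : robustSup (P s0 (σ s0)) vstar ≤
      robustSup (P s0 (σ s0)) vσ + (vstar s0 - vσ s0) := by
    apply csSup_le ((hne s0 (σ s0)).image _)
    rintro _ ⟨p, hp, rfl⟩
    have h2 : ∑ t, p t * vσ t ≤ robustSup (P s0 (σ s0)) vσ :=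
      le_csSup hbdd ⟨p, hp, rfl⟩
    obtain ⟨hp0, hp1⟩ := hsimplex s0 (σ s0) p hp
    have h3 : ∑ t, p t * vstar t ≤ ∑ t, (p t * vσ t + p t * (vstar s0 - vσ s0)) := by
      apply Finset.sum_le_sum
      intro t _
      have := mul_le_mul_of_nonneg_left (hs0 t) (hp0 t)
      linarith [mul_sub (p t) (vstar t) (vσ t)]
    rw [Finset.sum_add_distrib, ← Finset.sum_mul, hp1, one_mul] at h3
    simp only
    linarith
  have h4 : Finset.univ.inf' Finset.univ_nonempty (fun a => robustSup (P s0 a) vstar) ≤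
      robustSup (P s0 (σ s0)) vstar := Finset.inf'_le _ (Finset.mem_univ (σ s0))
  have h5 : c s0 + γ * Finset.univ.inf' Finset.univ_nonempty
      (fun a => robustSup (P s0 a) vstar) = vstar s0 := congrFun hfix s0
  have h6 := mul_le_mul_of_nonneg_left (h4.trans h1) hγ0
  have h7 := hval s0
  have h8 : vstar s0 - vσ s0 ≤ 0 := by
    by_contra! h
    nlinarith
  intro s
  have h9 : vstar s - vσ s ≤ vstar s0 - vσ s0 := hs0 s
  linarith
end

section
/- Let v* be the unique fixed point of T, let σ be an agent policy with value vector v^σ, and let s ∈ S with σ(s) = a. Then v^σ(s) − v*(s) ≥ γ · f(s,a). -/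
/-- The potential of a state-action pair:
`f(s,a) = max_{p ∈ P(s,a)} ∑_t p t * v* t − min_{a'} max_{p ∈ P(s,a')} ∑_t p t * v* t`. -/
noncomputable def potential {S A : Type*} [Fintype S] [Fintype A] [Nonempty A]
    (P : S → A → Set (S → ℝ)) (vstar : S → ℝ) (s : S) (a : A) : ℝ :=
  robustSup (P s a) vstar -
    Finset.univ.inf' Finset.univ_nonempty (fun a' => robustSup (P s a') vstar)

theorem robustSup_le_add_aux {S : Type*} [Fintype S] (P : Set (S → ℝ))
    (hne : P.Nonempty) (hc : IsCompact P)
    (hs : ∀ p ∈ P, (∀ t, 0 ≤ p t) ∧ ∑ t, p t = 1)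
    (v w : S → ℝ) (k : ℝ) (h : ∀ t, v t ≤ w t + k) :
    robustSup P v ≤ robustSup P w + k := by
  unfold robustSup
  apply csSup_le (hne.image _)
  rintro _ ⟨p, hp, rfl⟩
  have hb : BddAbove ((fun p : S → ℝ => ∑ t, p t * w t) '' P) :=
    (hc.image (by fun_prop)).bddAbove
  have h1 : ∑ t, p t * w t ≤ sSup ((fun p : S → ℝ => ∑ t, p t * w t) '' P) :=
    le_csSup hb ⟨p, hp, rfl⟩
  have h2 : ∑ t, p t * v t ≤ ∑ t, p t * (w t + k) :=
    Finset.sum_le_sum fun t _ => mul_le_mul_of_nonneg_left (h t) ((hs p hp).1 t)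
  have h3 : ∑ t, p t * (w t + k) = ∑ t, p t * w t + k := by
    simp only [mul_add, Finset.sum_add_distrib, ← Finset.sum_mul, (hs p hp).2, one_mul]
  show ∑ t, p t * v t ≤ _
  linarith

/-- Lower bound via the potential: if `σ s = a` then `vσ s - v* s ≥ γ · f(s,a)`. -/
theorem potential_lower_bound {S A : Type*}
    [Fintype S] [Nonempty S] [Fintype A] [Nonempty A]
    (c : S → ℝ) (γ : ℝ) (hγ0 : 0 ≤ γ) (hγ1 : γ < 1)
    (P : S → A → Set (S → ℝ))
    (hne : ∀ s a, (P s a).Nonempty)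
    (hcpt : ∀ s a, IsCompact (P s a))
    (hsimplex : ∀ s a, ∀ p ∈ P s a, (∀ t, 0 ≤ p t) ∧ ∑ t, p t = 1)
    (vstar : S → ℝ) (hfix : bellmanT c γ P vstar = vstar)
    (σ : S → A) (vσ : S → ℝ)
    (hval : ∀ s, vσ s = c s + γ * robustSup (P s (σ s)) vσ)
    (s : S) (a : A) (hsa : σ s = a) :
    γ * potential P vstar s a ≤ vσ s - vstar s := by
  have hfix' : ∀ s, c s + γ * Finset.univ.inf' Finset.univ_nonempty
      (fun a => robustSup (P s a) vstar) = vstar s := fun s => congrFun hfix s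
  obtain ⟨s0, hs0⟩ := Finite.exists_max (fun t => vstar t - vσ t)
  have hM : vstar s0 - vσ s0 ≤ 0 := by
    have h1 := robustSup_le_add_aux (P s0 (σ s0)) (hne _ _) (hcpt _ _) (hsimplex _ _)
      vstar vσ (vstar s0 - vσ s0) (fun t => by have := hs0 t; linarith)
    have h2 : Finset.univ.inf' Finset.univ_nonempty (fun a => robustSup (P s0 a) vstar)
        ≤ robustSup (P s0 (σ s0)) vstar := Finset.inf'_le _ (Finset.mem_univ _)
    have h3 := mul_le_mul_of_nonneg_left (h2.trans h1) hγ0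
    have h4 := hfix' s0
    have h5 := hval s0
    by_contra hcon
    nlinarith
  have h1 := robustSup_le_add_aux (P s a) (hne _ _) (hcpt _ _) (hsimplex _ _)
      vstar vσ 0 (fun t => by have := hs0 t; linarith)
  have h3 := mul_le_mul_of_nonneg_left h1 hγ0
  have h4 := hfix' s
  have h5 := hval s
  rw [hsa] at h5
  unfold potential
  rw [mul_sub]
  linarith
end

section
/- Let v* be the unique fixed point of T and let σ be an agent policy with value vector v^σ. Then ‖v^σ − v*‖∞ ≤ (γ/(1−γ)) · max_{s∈S} f(s, σ(s)). -/
theorem robustSup_le_add {S : Type*} [Fintype S] (Q : Set (S → ℝ)) (hne : Q.Nonempty)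
    (hc : IsCompact Q) (hs : ∀ p ∈ Q, (∀ t, 0 ≤ p t) ∧ ∑ t, p t = 1) (u v : S → ℝ) (N : ℝ)
    (h : ∀ t, u t ≤ v t + N) : robustSup Q u ≤ robustSup Q v + N := by
  have hb : BddAbove ((fun p : S → ℝ => ∑ t, p t * v t) '' Q) :=
    (hc.image (by fun_prop)).bddAbove
  unfold robustSup
  apply csSup_le (hne.image _)
  rintro _ ⟨p, hp, rfl⟩
  have h1 : ∑ t, p t * v t ≤ sSup ((fun p : S → ℝ => ∑ t, p t * v t) '' Q) :=
    le_csSup hb ⟨p, hp, rfl⟩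
  have h2 : ∑ t, p t * u t ≤ ∑ t, p t * (v t + N) :=
    Finset.sum_le_sum fun t _ => mul_le_mul_of_nonneg_left (h t) ((hs p hp).1 t)
  have h3 : ∑ t, p t * (v t + N) = ∑ t, p t * v t + N := by
    simp only [mul_add, Finset.sum_add_distrib, ← Finset.sum_mul, (hs p hp).2, one_mul]
  show ∑ t, p t * u t ≤ _
  linarith

/-- Upper bound via the potential:
`‖vσ - v*‖∞ ≤ (γ/(1-γ)) · max_{s} f(s, σ s)`. -/
theorem potential_upper_bound {S A : Type*}
    [Fintype S] [Nonempty S] [Fintype A] [Nonempty A]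
    (c : S → ℝ) (γ : ℝ) (hγ0 : 0 ≤ γ) (hγ1 : γ < 1)
    (P : S → A → Set (S → ℝ))
    (hne : ∀ s a, (P s a).Nonempty)
    (hcpt : ∀ s a, IsCompact (P s a))
    (hsimplex : ∀ s a, ∀ p ∈ P s a, (∀ t, 0 ≤ p t) ∧ ∑ t, p t = 1)
    (vstar : S → ℝ) (hfix : bellmanT c γ P vstar = vstar)
    (σ : S → A) (vσ : S → ℝ)
    (hval : ∀ s, vσ s = c s + γ * robustSup (P s (σ s)) vσ) :
    ‖vσ - vstar‖ ≤ γ / (1 - γ) *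
      Finset.univ.sup' Finset.univ_nonempty (fun s => potential P vstar s (σ s)) := by
  set F := Finset.univ.sup' Finset.univ_nonempty (fun s => potential P vstar s (σ s)) with hF
  have hfF : ∀ s, potential P vstar s (σ s) ≤ F := fun s =>
    Finset.le_sup' (fun s => potential P vstar s (σ s)) (Finset.mem_univ s)
  have hf0 : ∀ s, 0 ≤ potential P vstar s (σ s) := fun s =>
    sub_nonneg.2 (Finset.inf'_le (fun a' => robustSup (P s a') vstar) (Finset.mem_univ (σ s)))
  have hF0 : 0 ≤ F := (hf0 (Classical.arbitrary S)).trans (hfF _)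
  set N := ‖vσ - vstar‖ with hN
  have hN0 : 0 ≤ N := norm_nonneg _
  have hpt : ∀ t, |vσ t - vstar t| ≤ N := fun t => norm_le_pi_norm (vσ - vstar) t
  have key : N ≤ γ * (N + F) := by
    refine (pi_norm_le_iff_of_nonneg (by positivity)).2 fun s => ?_
    have e1 := hval s
    have e2 := congrFun hfix s
    have h1 := robustSup_le_add _ (hne s (σ s)) (hcpt s (σ s)) (hsimplex s (σ s)) vσ vstar N
      fun t => by linarith [(abs_le.1 (hpt t)).2]
    have h2 := robustSup_le_add _ (hne s (σ s)) (hcpt s (σ s)) (hsimplex s (σ s)) vstar vσ N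
      fun t => by linarith [(abs_le.1 (hpt t)).1]
    have h3 := hfF s
    have h4 := hf0 s
    unfold potential at h3 h4
    unfold bellmanT at e2
    set m := Finset.univ.inf' Finset.univ_nonempty (fun a' => robustSup (P s a') vstar)
    have e : (vσ - vstar) s = γ * (robustSup (P s (σ s)) vσ - m) := by
      rw [Pi.sub_apply]; linarith
    rw [e, Real.norm_eq_abs, abs_mul, abs_of_nonneg hγ0]
    refine mul_le_mul_of_nonneg_left (abs_le.2 ⟨?_, ?_⟩) hγ0 <;> linarith
  rw [div_mul_eq_mul_div, le_div_iff₀ (by linarith)]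
  linarith
end

section
/- Let P and Q be row-stochastic matrices, γ ∈ [0,1), and c : S → ℝ. Then (I − γP)⁻¹ c − (I − γQ)⁻¹ c = γ · (I − γP)⁻¹ (P − Q) (I − γQ)⁻¹ c, and consequently ‖(I − γP)⁻¹ c − (I − γQ)⁻¹ c‖∞ ≤ (γ/(1−γ)) · ‖(P − Q)(I − γQ)⁻¹ c‖∞. -/
open Matrix

theorem rd_bound {S : Type*} [Fintype S] [DecidableEq S]
    (P : Matrix S S ℝ)
    (h0 : ∀ s t, 0 ≤ P s t) (h1 : ∀ s, ∑ t, P s t = 1)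
    (γ : ℝ) (hγ0 : 0 ≤ γ) (v : S → ℝ) :
    (1 - γ) * ‖v‖ ≤ ‖(1 - γ • P) *ᵥ v‖ := by
  have hP : ‖P *ᵥ v‖ ≤ ‖v‖ := by
    rw [pi_norm_le_iff_of_nonneg (norm_nonneg _)]
    intro s
    calc ‖(P *ᵥ v) s‖ = ‖∑ t, P s t * v t‖ := rfl
      _ ≤ ∑ t, ‖P s t * v t‖ := norm_sum_le _ _
      _ ≤ ∑ t, P s t * ‖v‖ := by
        apply Finset.sum_le_sum
        intro t _
        rw [norm_mul, Real.norm_of_nonneg (h0 s t)]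
        exact mul_le_mul_of_nonneg_left (norm_le_pi_norm v t) (h0 s t)
      _ = ‖v‖ := by rw [← Finset.sum_mul, h1, one_mul]
  have hv : v = (1 - γ • P) *ᵥ v + γ • (P *ᵥ v) := by
    rw [sub_mulVec, one_mulVec, smul_mulVec]; simp
  have h2 : ‖v‖ ≤ ‖(1 - γ • P) *ᵥ v‖ + γ * ‖P *ᵥ v‖ := by
    calc ‖v‖ = ‖(1 - γ • P) *ᵥ v + γ • (P *ᵥ v)‖ := by rw [← hv]
      _ ≤ _ := norm_add_le _ _
      _ = _ := by rw [norm_smul, Real.norm_of_nonneg hγ0]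
  nlinarith [mul_le_mul_of_nonneg_left hP hγ0]

theorem rd_unit {S : Type*} [Fintype S] [DecidableEq S]
    (P : Matrix S S ℝ)
    (h0 : ∀ s t, 0 ≤ P s t) (h1 : ∀ s, ∑ t, P s t = 1)
    (γ : ℝ) (hγ0 : 0 ≤ γ) (hγ1 : γ < 1) : IsUnit (1 - γ • P).det := by
  rw [← Matrix.isUnit_iff_isUnit_det, ← Matrix.mulVec_injective_iff_isUnit]
  intro v w hvw
  have h := rd_bound P h0 h1 γ hγ0 (v - w)
  have h3 : (1 - γ • P) *ᵥ (v - w) = 0 := by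
    rw [mulVec_sub]; exact sub_eq_zero.mpr hvw
  rw [h3, norm_zero] at h
  have : ‖v - w‖ ≤ 0 := by
    by_contra hc
    push Not at hc
    nlinarith [mul_pos (sub_pos.mpr hγ1) hc]
  exact sub_eq_zero.mp (norm_le_zero_iff.mp this)

/-- Resolvent difference identity and norm bound for two row-stochastic matrices:
`(I-γP)⁻¹ c − (I-γQ)⁻¹ c = γ (I-γP)⁻¹ (P-Q) (I-γQ)⁻¹ c`, and consequently
`‖(I-γP)⁻¹ c − (I-γQ)⁻¹ c‖∞ ≤ (γ/(1-γ)) ‖(P-Q)(I-γQ)⁻¹ c‖∞`. -/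
theorem resolvent_difference {S : Type*} [Fintype S] [Nonempty S] [DecidableEq S]
    (P Q : Matrix S S ℝ)
    (hPnonneg : ∀ s t, 0 ≤ P s t) (hProw : ∀ s, ∑ t, P s t = 1)
    (hQnonneg : ∀ s t, 0 ≤ Q s t) (hQrow : ∀ s, ∑ t, Q s t = 1)
    (γ : ℝ) (hγ0 : 0 ≤ γ) (hγ1 : γ < 1)
    (c : S → ℝ) :
    (1 - γ • P)⁻¹ *ᵥ c - (1 - γ • Q)⁻¹ *ᵥ c
        = γ • (((1 - γ • P)⁻¹ * (P - Q) * (1 - γ • Q)⁻¹) *ᵥ c) ∧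
    ‖(1 - γ • P)⁻¹ *ᵥ c - (1 - γ • Q)⁻¹ *ᵥ c‖
        ≤ γ / (1 - γ) * ‖(P - Q) *ᵥ ((1 - γ • Q)⁻¹ *ᵥ c)‖ := by
  have hA := rd_unit P hPnonneg hProw γ hγ0 hγ1
  have hB := rd_unit Q hQnonneg hQrow γ hγ0 hγ1
  have key : (1 - γ • P)⁻¹ - (1 - γ • Q)⁻¹
      = γ • ((1 - γ • P)⁻¹ * (P - Q) * (1 - γ • Q)⁻¹) := by
    have e : γ • (P - Q) = (1 - γ • Q) - (1 - γ • P) := by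
      rw [smul_sub]; abel
    rw [← smul_mul_assoc, ← mul_smul_comm, e, mul_sub, sub_mul,
      Matrix.nonsing_inv_mul _ hA, one_mul, mul_assoc, Matrix.mul_nonsing_inv _ hB, mul_one]
  have id1 : (1 - γ • P)⁻¹ *ᵥ c - (1 - γ • Q)⁻¹ *ᵥ c
        = γ • (((1 - γ • P)⁻¹ * (P - Q) * (1 - γ • Q)⁻¹) *ᵥ c) := by
    rw [← sub_mulVec, key, smul_mulVec]
  refine ⟨id1, ?_⟩
  have hb := rd_bound P hPnonneg hProw γ hγ0
    (((1 - γ • P)⁻¹ * (P - Q) * (1 - γ • Q)⁻¹) *ᵥ c)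
  have e2 : (1 - γ • P) *ᵥ (((1 - γ • P)⁻¹ * (P - Q) * (1 - γ • Q)⁻¹) *ᵥ c)
      = (P - Q) *ᵥ ((1 - γ • Q)⁻¹ *ᵥ c) := by
    rw [mulVec_mulVec, mulVec_mulVec, mul_assoc, Matrix.mul_nonsing_inv_cancel_left _ _ hA]
  rw [e2] at hb
  rw [id1, norm_smul, Real.norm_of_nonneg hγ0, div_mul_eq_mul_div, mul_div_assoc]
  apply mul_le_mul_of_nonneg_left _ hγ0
  rw [le_div_iff₀ (sub_pos.mpr hγ1), mul_comm]
  exact hb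
end

section
/- Let S be a finite set with |S| = n ≥ 2, let P and Q be row-stochastic matrices, γ ∈ [0,1), c : S → ℝ, and set v* = (I − γP)⁻¹ c and v = (I − γQ)⁻¹ c. For each s ∈ S, let e_s : Fin n → S be a bijection such that i ↦ v*(e_s(i)) is nonincreasing, and define F_P(s,i) = ∑_{j ≤ i} P(s, e_s(j)) and F_Q(s,i) = ∑_{j ≤ i} Q(s, e_s(j)). Assume F_P(s,i) ≥ F_Q(s,i) for every s ∈ S and every i. Define f(s,i) = (F_P(s,i) − F_Q(s,i))·(v*(e_s(i)) − v*(e_s(i+1))) for i + 1 < n, and let f̂ = max over all s ∈ S and i with i + 1 < n of f(s,i). Then ‖v* − v‖∞ ≤ (γ·n/(1−γ)) · f̂. -/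
open Matrix

lemma aux_Iic {n : ℕ} (a : Fin n → ℝ) (i : Fin n) :
    ∑ j ∈ Finset.Iic i, a j = ∑ j, if j ≤ i then a j else 0 := by
  rw [← Finset.sum_filter]
  congr 1
  ext j
  simp

lemma aux_abel (m : ℕ) (a w : Fin (m+1) → ℝ) :
    ∑ i, a i * w i = (∑ i, a i) * w (Fin.last m) +
      ∑ i : Fin m, (∑ j, if j ≤ i.castSucc then a j else 0) * (w i.castSucc - w i.succ) := by
  induction m with
  | zero => simp
  | succ m ih =>
    have h := ih (fun i => a i.castSucc) (fun i => w i.castSucc)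
    rw [Fin.sum_univ_castSucc, h, Fin.sum_univ_castSucc (f := a)]
    rw [Fin.sum_univ_castSucc (n := m) (f := fun i : Fin (m+1) =>
      (∑ j, if j ≤ i.castSucc then a j else 0) * (w i.castSucc - w i.succ))]
    have h1 : ∀ i : Fin m, (∑ j : Fin (m+2), if j ≤ i.castSucc.castSucc then a j else 0)
        = ∑ j : Fin (m+1), if j ≤ i.castSucc then a j.castSucc else 0 := by
      intro i
      rw [Fin.sum_univ_castSucc]
      have : ¬ (Fin.last (m+1) ≤ i.castSucc.castSucc) := by
        rw [not_le]; exact Fin.castSucc_lt_last _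
      simp [this]
    have h2 : (∑ j : Fin (m+2), if j ≤ (Fin.last m).castSucc then a j else 0)
        = ∑ j : Fin (m+1), a j.castSucc := by
      rw [Fin.sum_univ_castSucc]
      have : ¬ (Fin.last (m+1) ≤ (Fin.last m).castSucc) := by
        rw [not_le]; exact Fin.castSucc_lt_last _
      simp [this, Fin.le_last]
    rw [h2]
    simp only [h1, Fin.succ_castSucc, Fin.succ_last]
    ring

lemma aux_bound (n : ℕ) (hn : 2 ≤ n) (a w : Fin n → ℝ) (f : ℝ) (ha : ∑ i, a i = 0)
    (h0 : ∀ i : Fin n, 0 ≤ ∑ j ∈ Finset.Iic i, a j)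
    (hw : ∀ i j : Fin n, i ≤ j → w j ≤ w i)
    (hf : ∀ i : Fin n, ∀ h : (i : ℕ) + 1 < n,
      (∑ j ∈ Finset.Iic i, a j) * (w i - w ⟨(i : ℕ) + 1, h⟩) ≤ f) :
    |∑ i, a i * w i| ≤ n * f := by
  obtain ⟨m, rfl⟩ : ∃ m, n = m + 1 := ⟨n - 1, by omega⟩
  have hnn : ∀ i : Fin m, 0 ≤ (∑ j ∈ Finset.Iic i.castSucc, a j) * (w i.castSucc - w i.succ) :=
    fun i => mul_nonneg (h0 _) (sub_nonneg.2 (hw _ _ (Fin.castSucc_lt_succ).le))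
  have hle : ∀ i : Fin m, (∑ j ∈ Finset.Iic i.castSucc, a j) * (w i.castSucc - w i.succ) ≤ f :=
    fun i => hf i.castSucc (by simp)
  have hf0 : 0 ≤ f := (hnn ⟨0, by omega⟩).trans (hle _)
  rw [aux_abel, ha, zero_mul, zero_add]
  simp only [← aux_Iic]
  rw [abs_of_nonneg (Finset.sum_nonneg fun i _ => hnn i)]
  calc _ ≤ ∑ i : Fin m, f := Finset.sum_le_sum fun i _ => hle i
    _ = m * f := by simp
    _ ≤ _ := by push_cast; nlinarith

lemma aux_contr {S : Type*} [Fintype S] (P : Matrix S S ℝ)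
    (h0 : ∀ s t, 0 ≤ P s t) (h1 : ∀ s, ∑ t, P s t = 1) (x : S → ℝ) (s : S) :
    |(P *ᵥ x) s| ≤ ‖x‖ := by
  calc |(P *ᵥ x) s| = |∑ t, P s t * x t| := rfl
    _ ≤ ∑ t, |P s t * x t| := Finset.abs_sum_le_sum_abs _ _
    _ ≤ ∑ t, P s t * ‖x‖ := Finset.sum_le_sum fun t _ => by
        rw [abs_mul, abs_of_nonneg (h0 s t)]
        exact mul_le_mul_of_nonneg_left (norm_le_pi_norm x t) (h0 s t)
    _ = ‖x‖ := by rw [← Finset.sum_mul, h1, one_mul]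

lemma aux_fix {S : Type*} [Fintype S] [DecidableEq S] (P : Matrix S S ℝ)
    (h0 : ∀ s t, 0 ≤ P s t) (h1 : ∀ s, ∑ t, P s t = 1) (γ : ℝ) (hγ0 : 0 ≤ γ) (hγ1 : γ < 1)
    (c v : S → ℝ) (hv : v = (1 - γ • P)⁻¹ *ᵥ c) (s : S) :
    v s = c s + γ * (P *ᵥ v) s := by
  have hdet : (1 - γ • P).det ≠ 0 := by
    intro hd
    obtain ⟨x, hx, hx0⟩ := Matrix.exists_mulVec_eq_zero_iff.2 hd
    rw [sub_mulVec, one_mulVec, smul_mulVec, sub_eq_zero] at hx0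
    have : ‖x‖ ≤ γ * ‖x‖ := by
      refine (pi_norm_le_iff_of_nonneg (by positivity)).2 fun t => ?_
      have ht := congrFun hx0 t
      rw [ht, Pi.smul_apply, smul_eq_mul, Real.norm_eq_abs, abs_mul, abs_of_nonneg hγ0]
      exact mul_le_mul_of_nonneg_left (aux_contr P h0 h1 x t) hγ0
    have hp : 0 < ‖x‖ := norm_pos_iff.2 hx
    nlinarith
  have h : (1 - γ • P) *ᵥ v = c := by
    rw [hv, mulVec_mulVec, Matrix.mul_nonsing_inv _ (isUnit_iff_ne_zero.2 hdet), one_mulVec]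
  rw [sub_mulVec, one_mulVec, smul_mulVec] at h
  have := congrFun h s
  simp only [Pi.sub_apply, Pi.smul_apply, smul_eq_mul] at this
  linarith

/-- Upper bound on the value gap by the worst-case potential:
if `v* = (I-γP)⁻¹ c`, `v = (I-γQ)⁻¹ c`, the successors are ordered by descending `v*`
via the bijections `e s`, cumulative probabilities satisfy `F_P(s,i) ≥ F_Q(s,i)`, and
`f̂` is the maximum of `f(s,i) = (F_P(s,i) − F_Q(s,i))(v*(e_s i) − v*(e_s (i+1)))`,
then `‖v* − v‖∞ ≤ (γ n / (1−γ)) f̂`. -/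
theorem potential_upper_bound_rmc {S : Type*} [Fintype S] [DecidableEq S]
    (n : ℕ) (hn : 2 ≤ n) (hcard : Fintype.card S = n)
    (P Q : Matrix S S ℝ)
    (hPnonneg : ∀ s t, 0 ≤ P s t) (hProw : ∀ s, ∑ t, P s t = 1)
    (hQnonneg : ∀ s t, 0 ≤ Q s t) (hQrow : ∀ s, ∑ t, Q s t = 1)
    (γ : ℝ) (hγ0 : 0 ≤ γ) (hγ1 : γ < 1)
    (c : S → ℝ)
    (vstar v : S → ℝ)
    (hvstar : vstar = (1 - γ • P)⁻¹ *ᵥ c)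
    (hv : v = (1 - γ • Q)⁻¹ *ᵥ c)
    (e : S → (Fin n ≃ S))
    (hmono : ∀ s : S, ∀ i j : Fin n, i ≤ j → vstar (e s j) ≤ vstar (e s i))
    (hF : ∀ s : S, ∀ i : Fin n,
      ∑ j ∈ Finset.Iic i, Q s (e s j) ≤ ∑ j ∈ Finset.Iic i, P s (e s j))
    (fhat : ℝ)
    (hfhat : IsGreatest {x : ℝ | ∃ s : S, ∃ i : Fin n, ∃ h : (i : ℕ) + 1 < n,
        x = ((∑ j ∈ Finset.Iic i, P s (e s j)) - ∑ j ∈ Finset.Iic i, Q s (e s j))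
            * (vstar (e s i) - vstar (e s ⟨(i : ℕ) + 1, h⟩))} fhat) :
    ‖vstar - v‖ ≤ γ * n / (1 - γ) * fhat := by
  have hP := aux_fix P hPnonneg hProw γ hγ0 hγ1 c vstar hvstar
  have hQ := aux_fix Q hQnonneg hQrow γ hγ0 hγ1 c v hv
  have key : ∀ s, |∑ t, (P s t - Q s t) * vstar t| ≤ n * fhat := by
    intro s
    rw [← Equiv.sum_comp (e s)]
    refine aux_bound n hn (fun i => P s (e s i) - Q s (e s i)) (fun i => vstar (e s i)) fhat
      ?_ ?_ (hmono s) ?_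
    · rw [Equiv.sum_comp (e s) (fun t => P s t - Q s t), Finset.sum_sub_distrib, hProw, hQrow,
        sub_self]
    · intro i
      rw [Finset.sum_sub_distrib]
      exact sub_nonneg.2 (hF s i)
    · intro i h
      rw [Finset.sum_sub_distrib]
      exact hfhat.2 ⟨s, i, h, rfl⟩
  have hne : Nonempty S := Fintype.card_pos_iff.1 (by omega)
  have hk0 : 0 ≤ n * fhat := (abs_nonneg _).trans (key hne.some)
  have hmain : ‖vstar - v‖ ≤ γ * (n * fhat) + γ * ‖vstar - v‖ := by
    refine (pi_norm_le_iff_of_nonneg (by positivity)).2 fun s => ?_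
    have h1 : (vstar - v) s = γ * (∑ t, (P s t - Q s t) * vstar t)
        + γ * (Q *ᵥ (vstar - v)) s := by
      have h2 : ∑ t, (P s t - Q s t) * vstar t = (P *ᵥ vstar) s - (Q *ᵥ vstar) s := by
        simp only [sub_mul, Finset.sum_sub_distrib]
        rfl
      rw [h2, mulVec_sub, Pi.sub_apply, Pi.sub_apply, hP s, hQ s]
      ring
    rw [h1, Real.norm_eq_abs]
    refine (abs_add_le _ _).trans ?_
    rw [abs_mul, abs_mul, abs_of_nonneg hγ0]
    exact add_le_add (mul_le_mul_of_nonneg_left (key s) hγ0)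
      (mul_le_mul_of_nonneg_left (aux_contr Q hQnonneg hQrow _ s) hγ0)
  have hpos : 0 < 1 - γ := by linarith
  rw [div_mul_eq_mul_div, le_div_iff₀ hpos]
  linarith
end

section
/- Let S be a finite set with |S| = n ≥ 2, let P, Q, Q' be row-stochastic matrices, γ ∈ [0,1), c : S → ℝ, and set v* = (I − γP)⁻¹ c, v = (I − γQ)⁻¹ c, v' = (I − γQ')⁻¹ c. For each s ∈ S, let e_s : Fin n → S be a bijection such that i ↦ v*(e_s(i)) is nonincreasing, and for R ∈ {P, Q, Q'} define F_R(s,i) = ∑_{j ≤ i} R(s, e_s(j)). Assume: F_P(s,i) ≥ F_Q(s,i) and F_P(s,i) ≥ F_{Q'}(s,i) for all s and i; v'(s) ≤ v*(s) for all s ∈ S; (ŝ, î) with î + 1 < n maximizes f(s,i) = (F_P(s,i) − F_Q(s,i))·(v*(e_s(i)) − v*(e_s(i+1))) over all s ∈ S and i with i + 1 < n; and F_P(ŝ,î) − F_{Q'}(ŝ,î) ≥ (1/2)·(F_P(ŝ,î) − F_Q(ŝ,î)). Then ‖v* − v'‖∞ ≥ ((1−γ)/(2n)) · ‖v* − v‖∞.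 -/
open Matrix

theorem hv_abel (m : ℕ) (a w : Fin (m+1) → ℝ) :
    ∑ i, a i * w i = ∑ i : Fin m, (∑ j, if j ≤ i.castSucc then a j else 0)
      * (w i.castSucc - w i.succ) + (∑ j, a j) * w (Fin.last m) := by
  induction m with
  | zero => simp
  | succ k ih =>
    rw [Fin.sum_univ_castSucc, ih (fun i => a i.castSucc) (fun i => w i.castSucc)]
    rw [Fin.sum_univ_castSucc (n := k)
      (f := fun i : Fin (k+1) => (∑ j, if j ≤ i.castSucc then a j else 0)
      * (w i.castSucc - w i.succ))]
    have h1 : ∀ i : Fin k, (∑ j : Fin (k+2), if j ≤ i.castSucc.castSucc then a j else 0)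
        = ∑ j : Fin (k+1), if j ≤ i.castSucc then a j.castSucc else 0 := by
      intro i
      rw [Fin.sum_univ_castSucc]
      have : ¬ (Fin.last (k+1) ≤ i.castSucc.castSucc) := by
        simp [Fin.le_def]
      simp [this]
    have h2 : (∑ j : Fin (k+2), if j ≤ (Fin.last k).castSucc then a j else 0)
        = ∑ j : Fin (k+1), a j.castSucc := by
      rw [Fin.sum_univ_castSucc]
      have : ¬ (Fin.last (k+1) ≤ (Fin.last k).castSucc) := by
        simp [Fin.le_def]
      have h : ∀ j : Fin (k+1), j.castSucc ≤ (Fin.last k).castSucc := fun j => by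
        simp [Fin.le_def]; omega
      simp [this, h]
    simp only [h1, h2]
    rw [Fin.sum_univ_castSucc (n := k+1) (f := a)]
    simp only [Fin.succ_castSucc, Fin.succ_last]
    ring

theorem hv_bound {S : Type*} [Fintype S] (R : Matrix S S ℝ)
    (h0 : ∀ s t, 0 ≤ R s t) (h1 : ∀ s, ∑ t, R s t = 1) (x : S → ℝ) (s : S) :
    |(R *ᵥ x) s| ≤ ‖x‖ := by
  calc |(R *ᵥ x) s| ≤ ∑ t, |R s t * x t| := Finset.abs_sum_le_sum_abs _ _
    _ ≤ ∑ t, R s t * ‖x‖ := by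
        refine Finset.sum_le_sum fun t _ => ?_
        rw [abs_mul, abs_of_nonneg (h0 s t)]
        exact mul_le_mul_of_nonneg_left (norm_le_pi_norm x t) (h0 s t)
    _ = ‖x‖ := by rw [← Finset.sum_mul, h1, one_mul]

theorem hv_fix {S : Type*} [Fintype S] [DecidableEq S] (R : Matrix S S ℝ)
    (h0 : ∀ s t, 0 ≤ R s t) (h1 : ∀ s, ∑ t, R s t = 1) (γ : ℝ) (hγ0 : 0 ≤ γ) (hγ1 : γ < 1)
    (c x : S → ℝ) (hx : x = (1 - γ • R)⁻¹ *ᵥ c) (s : S) : x s = c s + γ * (R *ᵥ x) s := by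
  have hu : IsUnit (1 - γ • R) := by
    rw [← Matrix.mulVec_injective_iff_isUnit]
    rw [← Matrix.coe_mulVecLin, ← LinearMap.ker_eq_bot, LinearMap.ker_eq_bot']
    intro y hy
    have hy2 : ∀ s, y s = γ * (R *ᵥ y) s := fun s => by
      have := congrFun hy s
      simp [Matrix.sub_mulVec, Matrix.smul_mulVec] at this
      linarith
    have hn : ‖y‖ ≤ γ * ‖y‖ := by
      refine (pi_norm_le_iff_of_nonneg (by positivity)).2 fun s => ?_
      rw [Real.norm_eq_abs, hy2 s, abs_mul, abs_of_nonneg hγ0]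
      exact mul_le_mul_of_nonneg_left (hv_bound R h0 h1 y s) hγ0
    have : ‖y‖ = 0 := by nlinarith [norm_nonneg y]
    exact norm_eq_zero.1 this
  have : (1 - γ • R) *ᵥ x = c := by
    rw [hx, Matrix.mulVec_mulVec, Matrix.mul_nonsing_inv _ ((Matrix.isUnit_iff_isUnit_det _).1 hu),
      Matrix.one_mulVec]
  have := congrFun this s
  simp [Matrix.sub_mulVec, Matrix.smul_mulVec] at this
  linarith

theorem hv_diff {S : Type*} [Fintype S] (m : ℕ) (P Q : Matrix S S ℝ)
    (hP : ∀ s, ∑ t, P s t = 1) (hQ : ∀ s, ∑ t, Q s t = 1) (w : S → ℝ) (s : S)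
    (e : Fin (m+1) ≃ S) :
    (P *ᵥ w) s - (Q *ᵥ w) s = ∑ i : Fin m,
      ((∑ j ∈ Finset.Iic i.castSucc, P s (e j)) - ∑ j ∈ Finset.Iic i.castSucc, Q s (e j))
       * (w (e i.castSucc) - w (e i.succ)) := by
  have hab := hv_abel m (fun j => P s (e j) - Q s (e j)) (fun j => w (e j))
  have hz : ∑ j, (P s (e j) - Q s (e j)) = 0 := by
    rw [Finset.sum_sub_distrib, e.sum_comp (fun t => P s t), e.sum_comp (fun t => Q s t), hP, hQ,
      sub_self]
  rw [hz, zero_mul, add_zero, e.sum_comp (fun t => (P s t - Q s t) * w t)] at hab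
  simp only [Matrix.mulVec, dotProduct]
  rw [← Finset.sum_sub_distrib]
  simp only [← sub_mul]
  rw [hab]
  refine Finset.sum_congr rfl fun i _ => ?_
  rw [← Finset.sum_sub_distrib, ← Finset.sum_filter]
  congr 2
  ext j
  simp

/-- Halving lemma: with `v* = (I-γP)⁻¹ c`, `v = (I-γQ)⁻¹ c`, `v' = (I-γQ')⁻¹ c`,
successors ordered by descending `v*` via bijections `e s`, cumulative dominance
`F_P ≥ F_Q` and `F_P ≥ F_{Q'}`, `v' ≤ v*` entrywise, `(ŝ, î)` maximizing
`f(s,i) = (F_P(s,i) − F_Q(s,i))(v*(e_s i) − v*(e_s (i+1)))`, and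
`F_P(ŝ,î) − F_{Q'}(ŝ,î) ≥ ½ (F_P(ŝ,î) − F_Q(ŝ,î))`, one has
`‖v* − v'‖∞ ≥ ((1−γ)/(2n)) ‖v* − v‖∞`. -/
theorem halving_value_contraction {S : Type*} [Fintype S] [DecidableEq S]
    (n : ℕ) (hn : 2 ≤ n) (hcard : Fintype.card S = n)
    (P Q Q' : Matrix S S ℝ)
    (hPnonneg : ∀ s t, 0 ≤ P s t) (hProw : ∀ s, ∑ t, P s t = 1)
    (hQnonneg : ∀ s t, 0 ≤ Q s t) (hQrow : ∀ s, ∑ t, Q s t = 1)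
    (hQ'nonneg : ∀ s t, 0 ≤ Q' s t) (hQ'row : ∀ s, ∑ t, Q' s t = 1)
    (γ : ℝ) (hγ0 : 0 ≤ γ) (hγ1 : γ < 1)
    (c : S → ℝ)
    (vstar v v' : S → ℝ)
    (hvstar : vstar = (1 - γ • P)⁻¹ *ᵥ c)
    (hv : v = (1 - γ • Q)⁻¹ *ᵥ c)
    (hv' : v' = (1 - γ • Q')⁻¹ *ᵥ c)
    (e : S → (Fin n ≃ S))
    (hmono : ∀ s : S, ∀ i j : Fin n, i ≤ j → vstar (e s j) ≤ vstar (e s i))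
    (hFQ : ∀ s : S, ∀ i : Fin n,
      ∑ j ∈ Finset.Iic i, Q s (e s j) ≤ ∑ j ∈ Finset.Iic i, P s (e s j))
    (hFQ' : ∀ s : S, ∀ i : Fin n,
      ∑ j ∈ Finset.Iic i, Q' s (e s j) ≤ ∑ j ∈ Finset.Iic i, P s (e s j))
    (hle : ∀ s, v' s ≤ vstar s)
    (shat : S) (ihat : Fin n) (hihat : (ihat : ℕ) + 1 < n)
    (hmax : ∀ s : S, ∀ i : Fin n, ∀ h : (i : ℕ) + 1 < n,
      ((∑ j ∈ Finset.Iic i, P s (e s j)) - ∑ j ∈ Finset.Iic i, Q s (e s j))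
          * (vstar (e s i) - vstar (e s ⟨(i : ℕ) + 1, h⟩))
        ≤ ((∑ j ∈ Finset.Iic ihat, P shat (e shat j))
              - ∑ j ∈ Finset.Iic ihat, Q shat (e shat j))
          * (vstar (e shat ihat) - vstar (e shat ⟨(ihat : ℕ) + 1, hihat⟩)))
    (hhalf : (1 / 2) * ((∑ j ∈ Finset.Iic ihat, P shat (e shat j))
              - ∑ j ∈ Finset.Iic ihat, Q shat (e shat j))
        ≤ (∑ j ∈ Finset.Iic ihat, P shat (e shat j))
              - ∑ j ∈ Finset.Iic ihat, Q' shat (e shat j)) :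
    (1 - γ) / (2 * n) * ‖vstar - v‖ ≤ ‖vstar - v'‖ := by
  obtain ⟨m, rfl⟩ : ∃ m, n = m + 1 := ⟨n - 1, by omega⟩
  have fs := hv_fix P hPnonneg hProw γ hγ0 hγ1 c vstar hvstar
  have fv := hv_fix Q hQnonneg hQrow γ hγ0 hγ1 c v hv
  have fv' := hv_fix Q' hQ'nonneg hQ'row γ hγ0 hγ1 c v' hv'
  clear hvstar hv hv'
  set M := ((∑ j ∈ Finset.Iic ihat, P shat (e shat j))
              - ∑ j ∈ Finset.Iic ihat, Q shat (e shat j))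
          * (vstar (e shat ihat) - vstar (e shat ⟨(ihat : ℕ) + 1, hihat⟩)) with hM
  have hgap : ∀ s (i : Fin m), 0 ≤ vstar (e s i.castSucc) - vstar (e s i.succ) := fun s i =>
    sub_nonneg.2 (hmono s _ _ (by simp [Fin.le_def]))
  have hM0 : 0 ≤ M := mul_nonneg (sub_nonneg.2 (hFQ _ _))
    (sub_nonneg.2 (hmono _ _ _ (by simp [Fin.le_def])))
  have hup : ∀ s, |(P *ᵥ vstar) s - (Q *ᵥ vstar) s| ≤ (m + 1 : ℝ) * M := fun s => by
    rw [hv_diff m P Q hProw hQrow vstar s (e s), abs_of_nonneg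
      (Finset.sum_nonneg fun i _ => mul_nonneg (sub_nonneg.2 (hFQ _ _)) (hgap s i))]
    calc _ ≤ ∑ i : Fin m, M :=
          Finset.sum_le_sum fun i _ => hmax s i.castSucc (by simp)
      _ = m * M := by simp
      _ ≤ _ := by linarith
  have hlow : M / 2 ≤ (P *ᵥ vstar) shat - (Q' *ᵥ vstar) shat := by
    rw [hv_diff m P Q' hProw hQ'row vstar shat (e shat)]
    refine le_trans ?_ (Finset.single_le_sum (fun i _ => mul_nonneg (sub_nonneg.2 (hFQ' _ _))
      (hgap shat i)) (Finset.mem_univ (⟨ihat, by omega⟩ : Fin m)))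
    have h2 := mul_le_mul_of_nonneg_right hhalf (hgap shat ⟨ihat, by omega⟩)
    refine le_trans (le_of_eq ?_) h2
    rw [hM, mul_assoc, div_eq_inv_mul, one_div]
    rfl
  have hd : (1 - γ) * ‖vstar - v‖ ≤ γ * ((m + 1 : ℝ) * M) := by
    have : ‖vstar - v‖ ≤ γ * ((m + 1 : ℝ) * M) + γ * ‖vstar - v‖ := by
      refine (pi_norm_le_iff_of_nonneg (by positivity)).2 fun s => ?_
      have hb := hv_bound Q hQnonneg hQrow (vstar - v) s
      have : (vstar - v) s = γ * ((P *ᵥ vstar) s - (Q *ᵥ vstar) s)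
          + γ * (Q *ᵥ (vstar - v)) s := by
        rw [Matrix.mulVec_sub, Pi.sub_apply, Pi.sub_apply, fs s, fv s]; ring
      rw [Real.norm_eq_abs, this]
      refine (abs_add_le _ _).trans ?_
      rw [abs_mul, abs_mul, abs_of_nonneg hγ0]
      exact add_le_add (mul_le_mul_of_nonneg_left (hup s) hγ0) (mul_le_mul_of_nonneg_left hb hγ0)
    linarith
  have hd' : γ * (M / 2) ≤ ‖vstar - v'‖ := by
    have h1 : (vstar - v') shat ≤ ‖vstar - v'‖ :=
      (le_abs_self _).trans (norm_le_pi_norm (vstar - v') shat)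
    have h2 : (vstar - v') shat = γ * ((P *ᵥ vstar) shat - (Q' *ᵥ vstar) shat)
          + γ * (Q' *ᵥ (vstar - v')) shat := by
      rw [Matrix.mulVec_sub, Pi.sub_apply, Pi.sub_apply, fs shat, fv' shat]; ring
    have h3 : 0 ≤ (Q' *ᵥ (vstar - v')) shat :=
      Finset.sum_nonneg fun t _ => mul_nonneg (hQ'nonneg _ _) (sub_nonneg.2 (hle t))
    nlinarith [mul_le_mul_of_nonneg_left hlow hγ0, mul_nonneg hγ0 h3]
  refine le_trans ?_ hd'
  rw [div_mul_eq_mul_div, div_le_iff₀ (by positivity)]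
  push_cast
  linarith
end

section
/- Let c' and D be positive integers with 2^{D−1} > 2c'. Let N ≥ 1 and let y_1, …, y_N be nonzero real numbers satisfying ⌊log₂ |y_{i+1}|⌋ ≥ ⌊log₂ |y_i|⌋ + D for all 1 ≤ i < N. Then for every vector x ∈ ℤ^N with x ≠ 0 and |x_i| ≤ c' for all i, we have ∑_{i=1}^N x_i y_i ≠ 0. -/
theorem msb_aux (c : ℕ) (hc : 0 < c) (n : ℕ) : ∀ (y : Fin (n + 1) → ℝ) (x : Fin (n + 1) → ℤ),
    (∀ i, y i ≠ 0) → (∀ i : ℕ, ∀ h : i + 1 < n + 1,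
      2 * (c : ℝ) * |y ⟨i, by omega⟩| < |y ⟨i + 1, h⟩|) → (∀ i, |x i| ≤ (c : ℤ)) →
    |∑ i, (x i : ℝ) * y i| ≤ 2 * c * |y (Fin.last n)| ∧
      (∑ i, (x i : ℝ) * y i = 0 → ∀ i, x i = 0) := by
  have hc1 : (1 : ℝ) ≤ c := by exact_mod_cast hc
  have hterm : ∀ (a : ℤ) (b : ℝ), |a| ≤ (c : ℤ) → |(a : ℝ) * b| ≤ c * |b| := by
    intro a b h
    rw [abs_mul]
    gcongr
    exact_mod_cast h
  induction n with
  | zero =>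
    intro y x hy _ hx
    refine ⟨?_, ?_⟩
    · have := hterm (x 0) (y 0) (hx 0)
      have h2 := abs_nonneg (y 0)
      simp only [Fin.sum_univ_succ, Fin.sum_univ_zero, add_zero]
      change _ ≤ 2 * (c : ℝ) * |y 0|
      nlinarith
    · intro h i
      have : i = 0 := Fin.ext (by have := i.isLt; simp; try omega)
      subst this
      simpa [hy 0] using h
  | succ n ih =>
    intro y x hy hs hx
    obtain ⟨h1, h2⟩ := ih (fun i => y i.castSucc) (fun i => x i.castSucc) (fun i => hy _)
      (fun i h => hs i (by omega)) (fun i => hx _)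
    have h3 : 2 * (c : ℝ) * |y (Fin.last n).castSucc| < |y (Fin.last (n + 1))| :=
      hs n (by omega)
    have h4 := hterm _ (y (Fin.last (n + 1))) (hx (Fin.last (n + 1)))
    rw [Fin.sum_univ_castSucc]
    refine ⟨?_, ?_⟩
    · refine (abs_add_le _ _).trans ?_
      have := abs_nonneg (y (Fin.last (n + 1)))
      nlinarith
    · intro h
      have hl : x (Fin.last (n + 1)) = 0 := by
        by_contra hne
        have h5 : (1 : ℝ) ≤ |(x (Fin.last (n + 1)) : ℝ)| := by
          exact_mod_cast Int.one_le_abs hne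
        have h6 := eq_neg_of_add_eq_zero_left h
        rw [h6, abs_neg, abs_mul] at h1
        have := abs_nonneg (y (Fin.last (n + 1)))
        nlinarith
      rw [hl] at h
      intro i
      refine Fin.lastCases hl (fun j => ?_) i
      exact h2 (by simpa using h) j

theorem msb_step (c D : ℕ) (hD : 0 < D) (hDc : 2 * c < 2 ^ (D - 1)) (a b : ℝ) (ha : a ≠ 0)
    (hb : b ≠ 0) (h : ⌊Real.logb 2 |a|⌋ + (D : ℤ) ≤ ⌊Real.logb 2 |b|⌋) :
    2 * (c : ℝ) * |a| < |b| := by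
  have ha' := abs_pos.2 ha
  have hb' := abs_pos.2 hb
  have h1 := Int.lt_floor_add_one (Real.logb 2 |a|)
  have h2 := Int.floor_le (Real.logb 2 |b|)
  have h3 : ((⌊Real.logb 2 |a|⌋ : ℝ)) + D ≤ ⌊Real.logb 2 |b|⌋ := by exact_mod_cast h
  have hd : ((D - 1 : ℕ) : ℝ) = D - 1 := by rw [Nat.cast_sub hD]; simp
  have h5 : (2 : ℝ) ^ (D - 1) * |a| ≤ |b| := by
    rw [← Real.logb_le_logb (b := 2) (by norm_num) (by positivity) hb',
      Real.logb_mul (by positivity) ha'.ne', Real.logb_pow, Real.logb_self_eq_one (by norm_num), hd]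
    linarith
  have h6 : 2 * (c : ℝ) < 2 ^ (D - 1) := by exact_mod_cast hDc
  nlinarith

/-- MSB separation implies bounded-coefficient linear independence: if the nonzero reals
`y₁, …, y_N` satisfy `⌊log₂ |y_{i+1}|⌋ ≥ ⌊log₂ |y_i|⌋ + D` with `2^{D-1} > 2c'`, then no
nontrivial integer combination with coefficients bounded by `c'` vanishes. -/
theorem msb_separation_linear_independence
    (c' D : ℕ) (hc' : 0 < c') (hD : 0 < D) (hDc : 2 * c' < 2 ^ (D - 1))
    (N : ℕ) (hN : 1 ≤ N) (y : Fin N → ℝ) (hy : ∀ i, y i ≠ 0)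
    (hsep : ∀ i : ℕ, ∀ h : i + 1 < N,
      ⌊Real.logb 2 |y ⟨i, by omega⟩|⌋ + (D : ℤ) ≤ ⌊Real.logb 2 |y ⟨i + 1, h⟩|⌋) :
    ∀ x : Fin N → ℤ, x ≠ 0 → (∀ i, |x i| ≤ (c' : ℤ)) →
      ∑ i, (x i : ℝ) * y i ≠ 0 := by
  intro x hx0 hx hsum
  obtain ⟨n, rfl⟩ : ∃ n, N = n + 1 := ⟨N - 1, by omega⟩
  exact hx0 (funext ((msb_aux c' hc' n y x hy
    (fun i h => msb_step c' D hD hDc _ _ (hy _) (hy _) (hsep i h)) hx).2 hsum))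
end

section
/- For every positive integer c there exists a constant C > 0 such that the following holds: for every finite set W of nonnegative real numbers with |W| ≥ 2, letting A(W) = { |∑_{w∈W} d(w)·w| : d : W → ℤ with |d(w)| ≤ c for all w }, the number of distinct values of ⌊log₂ y⌋ over nonzero y ∈ A(W) is at most C·|W|·log₂|W|. -/
lemma aux_geom (t : ℤ) (U : Finset ℤ) : ∀ t : ℤ, (∀ k ∈ U, k < t) →
    ∑ k ∈ U, 2 * (4:ℝ) ^ k ≤ 2 / 3 * (4:ℝ) ^ t := by
  induction U using Finset.induction_on_max with
  | empty => intro t _; simp; positivity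
  | insert a s ha ih =>
    intro t ht
    have hna : a ∉ s := fun h => lt_irrefl _ (ha a h)
    rw [Finset.sum_insert hna]
    have h1 := ih a ha
    have h2 : a + 1 ≤ t := ht a (Finset.mem_insert_self _ _)
    have h3 : (4:ℝ) ^ (a + 1) ≤ 4 ^ t := zpow_le_zpow_right₀ (by norm_num) h2
    rw [zpow_add_one₀ (by norm_num)] at h3
    linarith

lemma aux_inj (K T T' : Finset ℤ) (y : ℤ → ℝ) (b : ℝ) (hb : 0 < b)
    (hy : ∀ k ∈ K, b * 4 ^ k ≤ |y k| ∧ |y k| ≤ b * (2 * 4 ^ k))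
    (hT : T ⊆ K) (hT' : T' ⊆ K) (h : ∑ k ∈ T, y k = ∑ k ∈ T', y k) : T = T' := by
  by_contra hne
  let a : ℤ → ℝ := fun k => (if k ∈ T then 1 else 0) - (if k ∈ T' then 1 else 0)
  have hsum : ∑ k ∈ K, a k * y k = 0 := by
    simp only [a, sub_mul, ite_mul, one_mul, zero_mul, Finset.sum_sub_distrib]
    rw [← Finset.sum_filter, ← Finset.sum_filter, Finset.filter_mem_eq_inter,
      Finset.filter_mem_eq_inter, Finset.inter_eq_right.mpr hT, Finset.inter_eq_right.mpr hT', h,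
      sub_self]
  have hD : (K.filter (fun k => a k ≠ 0)).Nonempty := by
    by_contra hemp
    rw [Finset.not_nonempty_iff_eq_empty, Finset.filter_eq_empty_iff] at hemp
    apply hne
    ext k
    by_cases hk : k ∈ K
    · have := hemp hk
      simp only [a] at this
      by_cases h1 : k ∈ T <;> by_cases h2 : k ∈ T' <;> simp_all
    · exact ⟨fun h => absurd (hT h) hk, fun h => absurd (hT' h) hk⟩
  obtain ⟨t, htD, hmax⟩ := Finset.exists_max_image _ id hD
  simp only [id] at hmax
  rw [← Finset.sum_filter_of_ne (p := fun k => a k ≠ 0)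
    (fun k _ hk h0 => hk (by rw [h0, zero_mul]))] at hsum
  rw [← Finset.add_sum_erase _ _ htD] at hsum
  have ht := Finset.mem_filter.mp htD
  have habs : ∀ k, |a k| ≤ 1 := by
    intro k
    simp only [a]
    split_ifs <;> simp
  have hat : |a t| = 1 := by
    have := ht.2
    simp only [a] at this ⊢
    split_ifs at this ⊢ <;> simp_all
  have h1 : |y t| ≤ ∑ k ∈ (K.filter (fun k => a k ≠ 0)).erase t, b * (2 * 4 ^ k) := by
    have : a t * y t = - ∑ k ∈ (K.filter (fun k => a k ≠ 0)).erase t, a k * y k := by linarith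
    calc |y t| = |a t * y t| := by rw [abs_mul, hat, one_mul]
      _ ≤ ∑ k ∈ (K.filter (fun k => a k ≠ 0)).erase t, |a k * y k| := by
        rw [this, abs_neg]; exact Finset.abs_sum_le_sum_abs _ _
      _ ≤ _ := by
        apply Finset.sum_le_sum
        intro k hk
        have hkK := (Finset.mem_filter.mp (Finset.mem_of_mem_erase hk)).1
        rw [abs_mul]
        have := mul_le_mul_of_nonneg_right (habs k) (abs_nonneg (y k))
        linarith [(hy k hkK).2]
  rw [← Finset.mul_sum] at h1
  have h2 := aux_geom t ((K.filter (fun k => a k ≠ 0)).erase t) t (fun k hk =>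
    lt_of_le_of_ne (hmax k (Finset.mem_of_mem_erase hk)) (Finset.ne_of_mem_erase hk))
  have h3 := mul_le_mul_of_nonneg_left h2 hb.le
  have h4 := (hy t ht.1).1
  have h5 : 0 < b * (4:ℝ) ^ t := by positivity
  linarith

lemma aux_count (c : ℕ) (W : Finset ℝ) (K : Finset ℤ) (d : ℤ → ℝ → ℤ) (b : ℝ) (hb : 0 < b)
    (hd : ∀ k ∈ K, ∀ w ∈ W, |d k w| ≤ (c : ℤ))
    (hy : ∀ k ∈ K, b * 4 ^ k ≤ |∑ w ∈ W, (d k w : ℝ) * w| ∧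
      |∑ w ∈ W, (d k w : ℝ) * w| ≤ b * (2 * 4 ^ k)) :
    2 ^ K.card ≤ (2 * c * K.card + 1) ^ W.card := by
  have hc : (Fintype.piFinset (fun _ : W => Finset.Icc (-(c * K.card : ℤ)) (c * K.card))).card
      = (2 * c * K.card + 1) ^ W.card := by
    rw [Fintype.card_piFinset]
    simp only [Finset.prod_const, Int.card_Icc, Finset.card_univ, Fintype.card_coe]
    congr 1
    have : (c * K.card + 1 - -(c * K.card) : ℤ) = ((2 * c * K.card + 1 : ℕ) : ℤ) := by
      push_cast; ring
    rw [this, Int.toNat_natCast]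
  rw [← hc, ← Finset.card_powerset]
  apply Finset.card_le_card_of_injOn (fun T => fun w : W => ∑ k ∈ T, d k w)
  · intro T hT
    have hT : T ⊆ K := by simpa using hT
    simp only [Finset.mem_coe, Fintype.mem_piFinset, Finset.mem_Icc]
    intro w
    rw [← abs_le]
    calc |∑ k ∈ T, d k w| ≤ ∑ k ∈ T, |d k w| := Finset.abs_sum_le_sum_abs _ _
      _ ≤ ∑ k ∈ T, (c : ℤ) := Finset.sum_le_sum (fun k hk => hd k (hT hk) w w.2)
      _ = c * T.card := by simp [mul_comm]
      _ ≤ _ := by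
        have := Finset.card_le_card hT
        gcongr
  · intro T hT T' hT' h
    have hT : T ⊆ K := by simpa using hT
    have hT' : T' ⊆ K := by simpa using hT'
    refine aux_inj K T T' (fun k => ∑ w ∈ W, (d k w : ℝ) * w) b hb hy hT hT' ?_
    rw [Finset.sum_comm, Finset.sum_comm (s := T')]
    apply Finset.sum_congr rfl
    intro w hw
    rw [← Finset.sum_mul, ← Finset.sum_mul]
    have := congrFun h ⟨w, hw⟩
    simp only at this
    congr 1
    exact_mod_cast this

lemma aux_log (c m n : ℕ) (hc : 0 < c) (hn : 2 ≤ n) (h : 2 ^ m ≤ (2 * c * m + 1) ^ n) :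
    (m : ℝ) ≤ 2 * (Real.logb 2 (3 * c) + 2) * n * Real.logb 2 n := by
  have hcR : (1:ℝ) ≤ c := by exact_mod_cast hc
  have hnR : (2:ℝ) ≤ n := by exact_mod_cast hn
  have hL : 1 ≤ Real.logb 2 n := by
    rw [Real.le_logb_iff_rpow_le (by norm_num) (by linarith)]; simpa using hnR
  have hA : 0 ≤ Real.logb 2 (3 * c) := Real.logb_nonneg (by norm_num) (by linarith)
  rcases Nat.eq_zero_or_pos m with rfl | hm
  · push_cast; positivity
  have hmR : (1:ℝ) ≤ m := by exact_mod_cast hm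
  have h1 : (2:ℝ) ^ m ≤ (3 * c * m) ^ n := by
    calc (2:ℝ) ^ m ≤ (2 * c * m + 1) ^ n := by exact_mod_cast h
      _ ≤ _ := by
        gcongr
        nlinarith
  have h2 : (m : ℝ) ≤ n * Real.logb 2 (3 * c * m) := by
    have := Real.logb_le_logb_of_le (b := 2) (by norm_num) (by positivity) h1
    rw [Real.logb_pow, Real.logb_pow, Real.logb_self_eq_one (by norm_num)] at this
    linarith
  have h3 : Real.logb 2 (3 * c * m) = Real.logb 2 (3 * c) + Real.logb 2 n + Real.logb 2 (m / n) := by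
    rw [← Real.logb_mul (by positivity) (by positivity), ← Real.logb_mul (by positivity) (by positivity)]
    congr 1
    field_simp
  have h4 : ∀ x : ℝ, 0 < x → Real.logb 2 x ≤ x / 2 + 1 := by
    intro x hx
    have e1 := Real.log_le_sub_one_of_pos (x := x / 4) (by positivity)
    have e2 : Real.log 4 = 2 * Real.log 2 := by
      rw [show (4:ℝ) = 2 ^ 2 by norm_num, Real.log_pow]; norm_num
    rw [Real.log_div (by positivity) (by norm_num), e2] at e1
    have e3 := Real.log_two_gt_d9
    have e4 := Real.log_two_lt_d9
    unfold Real.logb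
    rw [div_le_iff₀ (by linarith)]
    nlinarith
  have h5 := h4 (m / n) (by positivity)
  have h6 : (m : ℝ) ≤ n * (Real.logb 2 (3 * c) + Real.logb 2 n + 1) + m / 2 := by
    calc (m : ℝ) ≤ n * (Real.logb 2 (3 * c) + Real.logb 2 n + (m / n / 2 + 1)) := by
          rw [h3] at h2
          refine h2.trans ?_
          gcongr
      _ = _ := by field_simp; ring
  have h7 : Real.logb 2 (3 * c) + Real.logb 2 n + 1 ≤ (Real.logb 2 (3 * c) + 2) * Real.logb 2 n := by
    nlinarith
  have h8 := mul_le_mul_of_nonneg_left h7 (by positivity : (0:ℝ) ≤ n)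
  linarith

/-- Combinatorial bound on the number of distinct binary scales of bounded-coefficient
signed subset sums: for every positive integer `c` there is a constant `C > 0` such that
for any finite set `W` of nonnegative reals with `|W| ≥ 2`, the set of values
`⌊log₂ y⌋` over nonzero `y ∈ A(W)` is finite with at most `C · |W| · log₂ |W|` elements,
where `A(W) = { |∑_{w ∈ W} d(w)·w| : d : W → ℤ, |d(w)| ≤ c }`. -/
theorem msb_count_of_signed_subset_sums (c : ℕ) (hc : 0 < c) :
    ∃ C : ℝ, 0 < C ∧
      ∀ W : Finset ℝ, (∀ w ∈ W, 0 ≤ w) → 2 ≤ W.card →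
        ∀ M : Set ℤ,
          M = {m : ℤ | ∃ d : ℝ → ℤ, (∀ w ∈ W, |d w| ≤ (c : ℤ)) ∧
                (∑ w ∈ W, (d w : ℝ) * w) ≠ 0 ∧
                m = ⌊Real.logb 2 |∑ w ∈ W, (d w : ℝ) * w|⌋} →
          M.Finite ∧ (M.ncard : ℝ) ≤ C * W.card * Real.logb 2 W.card := by
  have hcR : (1:ℝ) ≤ c := by exact_mod_cast hc
  have hA : 0 ≤ Real.logb 2 (3 * c) := Real.logb_nonneg (by norm_num) (by linarith)
  refine ⟨4 * (Real.logb 2 (3 * c) + 2), by positivity, ?_⟩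
  intro W _ hW M hM
  have hex : ∀ s : ℤ, ∃ d : ℝ → ℤ, s ∈ M → (∀ w ∈ W, |d w| ≤ (c : ℤ)) ∧
      (2:ℝ) ^ s ≤ |∑ w ∈ W, (d w : ℝ) * w| ∧ |∑ w ∈ W, (d w : ℝ) * w| ≤ 2 ^ (s + 1) := by
    intro s
    by_cases hs : s ∈ M
    · rw [hM] at hs
      obtain ⟨d, h1, h2, h3⟩ := hs
      refine ⟨d, fun _ => ⟨h1, ?_, ?_⟩⟩
      · have := Int.floor_le (Real.logb 2 |∑ w ∈ W, (d w : ℝ) * w|)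
        rw [← h3, Real.le_logb_iff_rpow_le (by norm_num) (abs_pos.mpr h2), Real.rpow_intCast] at this
        exact this
      · have := (Int.lt_floor_add_one (Real.logb 2 |∑ w ∈ W, (d w : ℝ) * w|)).le
        rw [← h3, Real.logb_le_iff_le_rpow (by norm_num) (abs_pos.mpr h2)] at this
        rw [← Real.rpow_intCast]
        push_cast
        exact this
    · exact ⟨0, fun h => absurd h hs⟩
  choose D hD using hex
  have key : ∀ (S : Finset ℤ) (r : ℤ), ↑S ⊆ M → (∀ s ∈ S, s % 2 = r) →
      (S.card : ℝ) ≤ 2 * (Real.logb 2 (3 * c) + 2) * W.card * Real.logb 2 W.card := by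
    intro S r hS hr
    apply aux_log c _ _ hc hW
    have hcard : (S.image (fun s => s / 2)).card = S.card := by
      apply Finset.card_image_of_injOn
      intro x hx z hz hxz
      have := hr x hx
      have := hr z hz
      simp only at hxz
      omega
    rw [← hcard]
    have hmem : ∀ k ∈ S.image (fun s => s / 2), 2 * k + r ∈ M := by
      intro k hk
      obtain ⟨s, hs, rfl⟩ := Finset.mem_image.mp hk
      have h := hr s hs
      have : 2 * (s / 2) + r = s := by omega
      rw [this]; exact hS hs
    have e : ∀ k : ℤ, (2:ℝ) ^ (2 * k + r) = 2 ^ r * 4 ^ k := by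
      intro k
      rw [zpow_add₀ (by norm_num), zpow_mul, mul_comm]; norm_num
    refine aux_count c W _ (fun k => D (2 * k + r)) (2 ^ r) (by positivity) ?_ ?_
    · intro k hk
      exact (hD _ (hmem k hk)).1
    · intro k hk
      have := (hD _ (hmem k hk)).2
      rw [zpow_add_one₀ (by norm_num), e] at this
      exact ⟨this.1, by linarith [this.2]⟩
  have key2 : ∀ S : Finset ℤ, ↑S ⊆ M →
      (S.card : ℝ) ≤ 4 * (Real.logb 2 (3 * c) + 2) * W.card * Real.logb 2 W.card := by
    intro S hS
    have h0 := key (S.filter (fun s => s % 2 = 0)) 0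
      (fun s hs => hS (Finset.mem_filter.mp hs).1) (fun s hs => (Finset.mem_filter.mp hs).2)
    have h1 := key (S.filter (fun s => ¬ s % 2 = 0)) 1
      (fun s hs => hS (Finset.mem_filter.mp hs).1)
      (fun s hs => by have := (Finset.mem_filter.mp hs).2; omega)
    have h2 : ((S.filter (fun s => s % 2 = 0)).card : ℝ) + (S.filter (fun s => ¬ s % 2 = 0)).card
        = S.card := by
      exact_mod_cast Finset.card_filter_add_card_filter_not (s := S) (fun s => s % 2 = 0)
    linarith
  have hfin : M.Finite := by
    by_contra hinf
    obtain ⟨N, hN⟩ := exists_nat_gt (4 * (Real.logb 2 (3 * c) + 2) * W.card * Real.logb 2 W.card)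
    obtain ⟨S, hS, hSc⟩ := Set.Infinite.exists_subset_card_eq hinf N
    have := key2 S hS
    rw [hSc] at this
    linarith
  refine ⟨hfin, ?_⟩
  rw [Set.ncard_eq_toFinset_card M hfin]
  exact key2 _ (by simp)
end

section
/- For all integers p ≥ 1 and n ≥ 1, the greedy remainder satisfies n − (⌊n^{1/p}⌋)^p < 2^p · n^{(p−1)/p}, where n^{1/p} and n^{(p−1)/p} denote real powers of n and ⌊·⌋ is the integer floor. -/
theorem greedy_aux (x a : ℝ) (ha : 0 ≤ a) (hax : a ≤ x) (h1 : x - a ≤ 1) (q : ℕ) :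
    x ^ (q + 1) - a ^ (q + 1) ≤ ((q : ℝ) + 1) * x ^ q := by
  induction q with
  | zero => simpa using h1
  | succ q ih =>
    have hx : 0 ≤ x := ha.trans hax
    have e1 : x * (x ^ (q + 1) - a ^ (q + 1)) ≤ x * (((q : ℝ) + 1) * x ^ q) :=
      mul_le_mul_of_nonneg_left ih hx
    have e2 : a ^ (q + 1) * (x - a) ≤ a ^ (q + 1) * 1 :=
      mul_le_mul_of_nonneg_left h1 (by positivity)
    have e3 : a ^ (q + 1) ≤ x ^ (q + 1) := pow_le_pow_left₀ ha hax _
    push_cast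
    calc x ^ (q + 1 + 1) - a ^ (q + 1 + 1)
        = x * (x ^ (q + 1) - a ^ (q + 1)) + a ^ (q + 1) * (x - a) := by ring
      _ ≤ x * (((q : ℝ) + 1) * x ^ q) + x ^ (q + 1) := by linarith
      _ = _ := by ring

/-- The greedy remainder bound: for integers `p ≥ 1` and `n ≥ 1`,
`n − ⌊n^{1/p}⌋^p < 2^p · n^{(p−1)/p}`. -/
theorem greedy_remainder_bound (p n : ℕ) (hp : 1 ≤ p) (hn : 1 ≤ n) :
    (n : ℝ) - (⌊(n : ℝ) ^ ((1 : ℝ) / p)⌋ : ℝ) ^ p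
      < 2 ^ p * (n : ℝ) ^ (((p : ℝ) - 1) / p) := by
  obtain ⟨q, rfl⟩ : ∃ q, p = q + 1 := ⟨p - 1, by omega⟩
  have hn0 : (0 : ℝ) < n := by exact_mod_cast hn
  have hq : ((q + 1 : ℕ) : ℝ) ≠ 0 := by positivity
  set x : ℝ := (n : ℝ) ^ ((1 : ℝ) / (q + 1 : ℕ)) with hx
  have hx0 : 0 < x := Real.rpow_pos_of_pos hn0 _
  have hxn : (n : ℝ) = x ^ (q + 1) := by
    rw [hx, ← Real.rpow_natCast, ← Real.rpow_mul hn0.le, one_div_mul_cancel hq, Real.rpow_one]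
  have hxq : (n : ℝ) ^ ((((q + 1 : ℕ) : ℝ) - 1) / (q + 1 : ℕ)) = x ^ q := by
    rw [hx, ← Real.rpow_natCast, ← Real.rpow_mul hn0.le]
    congr 1
    push_cast
    ring
  rw [hxq]
  have h := greedy_aux x ⌊x⌋ (by exact_mod_cast Int.floor_nonneg.mpr hx0.le) (Int.floor_le x)
    (by linarith [Int.lt_floor_add_one x]) q
  have h2 : ((q : ℝ) + 1) < 2 ^ (q + 1) := by exact_mod_cast Nat.lt_two_pow_self (n := q + 1)
  calc (n : ℝ) - (⌊x⌋ : ℝ) ^ (q + 1) = x ^ (q + 1) - (⌊x⌋ : ℝ) ^ (q + 1) := by rw [← hxn]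
    _ ≤ _ := h
    _ < _ := mul_lt_mul_of_pos_right h2 (by positivity)
end

section
/- Let p, q ≥ 1 be coprime integers and k a positive integer such that q divides k·p + 1. Let a_1, …, a_n be positive integers and α a real number. Define w = ∏_{j=1}^n a_j^k, and for each i define z_i = ∏_{j ≠ i} a_j^k and y_i = a_i^{(kp+1)/q} (an integer, since q divides kp+1). Suppose for each i there are nonnegative integers c_{i,1}, …, c_{i,m_i} with z_i = ∑_{j=1}^{m_i} c_{i,j}^q. Then ∑_{i=1}^n a_i^{1/p} ≥ α if and only if ∑_{i=1}^n ∑_{j=1}^{m_i} (c_{i,j}^p · y_i)^{q/p} ≥ w·α, where x^{1/p} and x^{q/p} denote real powers of the nonnegative real x. -/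
/-- Reduction of `p`-ROOT-SUM to `p/q`-ROOT-SUM: with `w = ∏ a_j^k`,
`z_i = ∏_{j≠i} a_j^k`, `y_i = a_i^{(kp+1)/q}`, and decompositions
`z_i = ∑_j c_{i,j}^q`, we have
`∑ a_i^{1/p} ≥ α ↔ ∑_i ∑_j (c_{i,j}^p · y_i)^{q/p} ≥ w·α`. -/
theorem root_sum_reduction (p q k : ℕ) (hp : 1 ≤ p) (hq : 1 ≤ q)
    (hpq : Nat.Coprime p q) (hk : 0 < k) (hdvd : q ∣ k * p + 1)
    (n : ℕ) (a : Fin n → ℕ) (ha : ∀ i, 0 < a i) (α : ℝ)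
    (m : Fin n → ℕ) (c : (i : Fin n) → Fin (m i) → ℕ)
    (hz : ∀ i, (∏ j ∈ Finset.univ.erase i, a j ^ k) = ∑ j, c i j ^ q) :
    (α ≤ ∑ i, (a i : ℝ) ^ ((1 : ℝ) / p)) ↔
      ((∏ j, a j ^ k : ℕ) : ℝ) * α
        ≤ ∑ i, ∑ j, ((c i j ^ p * a i ^ ((k * p + 1) / q) : ℕ) : ℝ) ^ ((q : ℝ) / p) := by
  have hp0 : (p : ℝ) ≠ 0 := by positivity
  obtain ⟨e, he⟩ := hdvd
  have hdiv : (k * p + 1) / q = e := by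
    rw [he]; exact Nat.mul_div_cancel_left e hq
  have heR : (k : ℝ) * p + 1 = q * e := by exact_mod_cast he
  have key : ∀ i j, ((c i j ^ p * a i ^ ((k * p + 1) / q) : ℕ) : ℝ) ^ ((q : ℝ) / p)
      = (c i j : ℝ) ^ q * ((a i : ℝ) ^ k * (a i : ℝ) ^ ((1 : ℝ) / p)) := by
    intro i j
    have hai : (0 : ℝ) < a i := by exact_mod_cast ha i
    rw [hdiv]
    push_cast
    rw [Real.mul_rpow (by positivity) (by positivity), ← Real.rpow_natCast (c i j : ℝ) p,
      ← Real.rpow_natCast (a i : ℝ) e, ← Real.rpow_mul (by positivity),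
      ← Real.rpow_mul (by positivity), ← Real.rpow_natCast (a i : ℝ) k, ← Real.rpow_add hai,
      ← Real.rpow_natCast (c i j : ℝ) q]
    congr 2
    · field_simp
    · field_simp
      linarith
  have hsum : ∑ i, ∑ j, ((c i j ^ p * a i ^ ((k * p + 1) / q) : ℕ) : ℝ) ^ ((q : ℝ) / p)
      = ((∏ j, a j ^ k : ℕ) : ℝ) * ∑ i, (a i : ℝ) ^ ((1 : ℝ) / p) := by
    rw [Finset.mul_sum]
    refine Finset.sum_congr rfl fun i _ => ?_
    simp only [key]
    rw [← Finset.sum_mul, ← Finset.mul_prod_erase _ _ (Finset.mem_univ i), hz i]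
    push_cast
    ring
  have hw : (0 : ℝ) < ((∏ j, a j ^ k : ℕ) : ℝ) := by
    exact_mod_cast Finset.prod_pos fun j _ => pow_pos (ha j) k
  rw [hsum]
  exact (mul_le_mul_iff_right₀ hw).symm
end

section
/- Let M ≥ 1 be an integer, p ≥ 2 an integer, and set δ = 1/(2M) and q = p/(p−1). Let u : Fin M → ℝ with u(k) ≥ 0 for all k, and define v : Fin M ⊕ Fin M → ℝ by v(inl k) = u(k)^{p−1} and v(inr k) = −u(k)^{p−1}. Then the maximum of ∑_j d(j)·v(j) over all d : Fin M ⊕ Fin M → ℝ satisfying (∑_j |d(j)|^p)^{1/p} ≤ δ, ∑_j d(j) = 0, and d(j) ≥ −δ for all j, equals δ · (∑_j |v(j)|^q)^{1/q}. -/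
/-- Hölder attainment for the symmetric gadget: with `δ = 1/(2M)`, `q = p/(p−1)`,
`u ≥ 0`, and `v(inl k) = u(k)^{p−1}`, `v(inr k) = −u(k)^{p−1}`, the maximum of
`∑ d(j) v(j)` over all `d` with `(∑ |d(j)|^p)^{1/p} ≤ δ`, `∑ d(j) = 0`, and `d(j) ≥ −δ`
equals `δ · (∑ |v(j)|^q)^{1/q}`. -/
theorem holder_gadget_max (M p : ℕ) (hM : 1 ≤ M) (hp : 2 ≤ p)
    (δ : ℝ) (hδ : δ = 1 / (2 * (M : ℝ)))
    (u : Fin M → ℝ) (hu : ∀ k, 0 ≤ u k)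
    (v : (Fin M ⊕ Fin M) → ℝ)
    (hv : v = Sum.elim (fun k => u k ^ (p - 1)) (fun k => -(u k ^ (p - 1)))) :
    IsGreatest
      {x : ℝ | ∃ d : (Fin M ⊕ Fin M) → ℝ,
        (∑ j, |d j| ^ (p : ℝ)) ^ ((1 : ℝ) / p) ≤ δ ∧
        (∑ j, d j) = 0 ∧
        (∀ j, -δ ≤ d j) ∧
        x = ∑ j, d j * v j}
      (δ * (∑ j, |v j| ^ ((p : ℝ) / ((p : ℝ) - 1))) ^ (((p : ℝ) - 1) / (p : ℝ))) := by
  have hp0 : (0:ℝ) < p := by positivity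
  have hp2 : (2:ℝ) ≤ p := by exact_mod_cast hp
  have hp1 : (0:ℝ) < (p:ℝ) - 1 := by linarith
  have hM0 : (0:ℝ) < M := by exact_mod_cast hM
  have hδ0 : 0 < δ := by rw [hδ]; positivity
  have hconj : Real.HolderConjugate (p:ℝ) ((p:ℝ) / ((p:ℝ) - 1)) :=
    Real.HolderConjugate.conjExponent (by linarith)
  have hinv : (1:ℝ) / ((p:ℝ) / ((p:ℝ) - 1)) = ((p:ℝ) - 1) / p := by
    rw [one_div_div]
  constructor
  · have hq : ∀ k, |u k ^ (p - 1)| ^ ((p : ℝ) / ((p : ℝ) - 1)) = u k ^ p := by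
      intro k
      rw [abs_of_nonneg (pow_nonneg (hu k) _), ← Real.rpow_natCast, ← Real.rpow_mul (hu k),
        ← Real.rpow_natCast (u k) p]
      congr 1
      rw [Nat.cast_sub (by omega)]
      push_cast
      field_simp
    have hS : (∑ j, |v j| ^ ((p : ℝ) / ((p : ℝ) - 1))) = 2 * ∑ k, u k ^ p := by
      rw [hv, Fintype.sum_sum_type]
      simp only [Sum.elim_inl, Sum.elim_inr, abs_neg, hq]
      ring
    rw [hS]
    obtain ⟨S, hSd⟩ : ∃ S, S = 2 * ∑ k, u k ^ p := ⟨_, rfl⟩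
    rw [← hSd]
    have hT0 : 0 ≤ ∑ k, u k ^ p := Finset.sum_nonneg fun k _ => pow_nonneg (hu k) _
    have hS0 : 0 ≤ S := by rw [hSd]; linarith
    rcases hS0.eq_or_lt with h0 | hpos
    · refine ⟨fun _ => 0, ?_, by simp, fun _ => by linarith, ?_⟩
      · simp only [abs_zero, Real.zero_rpow hp0.ne', Finset.sum_const_zero]
        rw [Real.zero_rpow (by positivity)]
        exact hδ0.le
      · rw [← h0, Real.zero_rpow (by positivity)]
        simp
    · obtain ⟨N, hN⟩ : ∃ N, N = S ^ ((1:ℝ) / p) := ⟨_, rfl⟩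
      have hN0 : 0 < N := by rw [hN]; positivity
      have hNp : N ^ p = S := by
        rw [hN, one_div, Real.rpow_inv_natCast_pow hS0 (by omega)]
      have hc0 : 0 ≤ δ / N := by positivity
      refine ⟨Sum.elim (fun k => δ / N * u k) (fun k => -(δ / N * u k)), ?_, ?_, ?_, ?_⟩
      · have : (∑ j, |(Sum.elim (fun k => δ / N * u k) (fun k => -(δ / N * u k)) :
            (Fin M ⊕ Fin M) → ℝ) j| ^ (p : ℝ)) = δ ^ p := by
          rw [Fintype.sum_sum_type]
          simp only [Sum.elim_inl, Sum.elim_inr, abs_neg, Real.rpow_natCast]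
          simp only [abs_of_nonneg (mul_nonneg hc0 (hu _)), mul_pow, ← Finset.mul_sum]
          rw [div_pow, hNp]
          have : (∑ k, u k ^ p) = S / 2 := by rw [hSd]; ring
          rw [this]
          field_simp
          ring
        rw [this, one_div, Real.pow_rpow_inv_natCast hδ0.le (by omega)]
      · rw [Fintype.sum_sum_type]
        simp
      · have key : ∀ k, δ / N * u k ≤ δ := by
          intro k
          have h1 : u k ≤ N := by
            refine le_of_pow_le_pow_left₀ (n := p) (by omega) hN0.le ?_
            rw [hNp, hSd]
            have := Finset.single_le_sum (f := fun k => u k ^ p)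
              (fun k _ => pow_nonneg (hu k) p) (Finset.mem_univ k)
            linarith
          calc δ / N * u k ≤ δ / N * N := by gcongr
            _ = δ := by field_simp
        rintro (k | k)
        · have := mul_nonneg hc0 (hu k)
          simp only [Sum.elim_inl]
          linarith
        · have := key k
          simp only [Sum.elim_inr]
          linarith
      · have hpw : S ^ (((p:ℝ) - 1) / p) = S / N := by
          rw [hN, sub_div, div_self hp0.ne', Real.rpow_sub hpos, Real.rpow_one]
        rw [hpw, hv, Fintype.sum_sum_type]
        simp only [Sum.elim_inl, Sum.elim_inr, neg_mul_neg]
        have : ∀ k, δ / N * u k * u k ^ (p - 1) = δ / N * u k ^ p := by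
          intro k
          rw [mul_assoc, mul_pow_sub_one (by omega)]
        simp only [this, ← Finset.mul_sum]
        rw [hSd]
        ring
  · rintro x ⟨d, h1, -, -, rfl⟩
    have h := Real.inner_le_Lp_mul_Lq Finset.univ d v hconj
    rw [hinv] at h
    refine h.trans (mul_le_mul_of_nonneg_right h1 ?_)
    positivity
end
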